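/- Let p be a prime, S a commutative ring of characteristic p, and R = S[T, T₁₁, T₁₂, T₂₂] the polynomial ring in four variables. For ij ∈ {11, 12, 22} let D_ij : R → R be the S-linear operator D_ij(f) = (T_ij + 1)·∂f/∂T_ij. Define Θ₃(f) = T^{2p}·D₁₁(f) − T^p·D₁₂(f) + D₂₂(f) and, for N ∈ ℤ, θ₄⁽ᴺ⁾(f) = (T − T^p)·∂f/∂T + N·f. Then for every N ∈ ℤ, Θ₃ ∘ θ₄⁽ᴺ⁾ = θ₄⁽ᴺ⁻²ᵖ⁾ ∘ Θ₃ as S-linear endomorphisms of R. -/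

import Mathlib

open MvPolynomial

/-- The operator `D_ij : f ↦ (T_ij + 1)·∂f/∂T_ij` on `S[T, T₁₁, T₁₂, T₂₂]`,
with the variables indexed by `Fin 4` as `0 ↦ T`, `1 ↦ T₁₁`, `2 ↦ T₁₂`, `3 ↦ T₂₂`. -/
noncomputable def Dij {S : Type*} [CommRing S] (i : Fin 4) (f : MvPolynomial (Fin 4) S) :
    MvPolynomial (Fin 4) S :=
  (X i + 1) * pderiv i f

/-- `Θ₁ f = T²·D₁₁ f − T·D₁₂ f + D₂₂ f`. -/
noncomputable def Theta1 {S : Type*} [CommRing S] (f : MvPolynomial (Fin 4) S) :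
    MvPolynomial (Fin 4) S :=
  X 0 ^ 2 * Dij 1 f - X 0 * Dij 2 f + Dij 3 f

/-- `Θ₂ f = 2T^{p+1}·D₁₁ f − (T + T^p)·D₁₂ f + 2·D₂₂ f`. -/
noncomputable def Theta2 {S : Type*} [CommRing S] (p : ℕ) (f : MvPolynomial (Fin 4) S) :
    MvPolynomial (Fin 4) S :=
  2 * X 0 ^ (p + 1) * Dij 1 f - (X 0 + X 0 ^ p) * Dij 2 f + 2 * Dij 3 f

/-- `Θ₃ f = T^{2p}·D₁₁ f − T^p·D₁₂ f + D₂₂ f`. -/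
noncomputable def Theta3 {S : Type*} [CommRing S] (p : ℕ) (f : MvPolynomial (Fin 4) S) :
    MvPolynomial (Fin 4) S :=
  X 0 ^ (2 * p) * Dij 1 f - X 0 ^ p * Dij 2 f + Dij 3 f

/-- `θ₄⁽ᴺ⁾ f = (T − T^p)·∂f/∂T + N·f`. -/
noncomputable def theta4 {S : Type*} [CommRing S] (p : ℕ) (N : ℤ) (f : MvPolynomial (Fin 4) S) :
    MvPolynomial (Fin 4) S :=
  (X 0 - X 0 ^ p) * pderiv 0 f + (N : MvPolynomial (Fin 4) S) * f

/-!
Let `q` be an exponent that vanishes in `S`, such as `p`. Both `Θ₃` and `θ₄⁽⁰⁾` are derivations: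
`Θ₃` is a combination of `∂/∂T₁₁`, `∂/∂T₁₂`, `∂/∂T₂₂`, and `θ₄⁽⁰⁾` is a multiple of `∂/∂T`. The
coefficients of `Θ₃` involve `T` only through powers of `T^q`, which `∂/∂T` kills, and the
coefficient of `θ₄⁽⁰⁾` involves `T` alone, so the two derivations commute. Adding multiplication by
`N` to `θ₄⁽⁰⁾` preserves this by linearity, and the weight shift `2q` vanishes in `S`.
-/

section Derivation

theorem derivation_pow_eq_zero_of_natCast_eq_zero {R A M : Type*} [CommSemiring R]
    [CommSemiring A] [Algebra R A] [AddCommMonoid M] [Module A M] [Module R M]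
    (D : Derivation R A M) {n : ℕ} (hn : (n : R) = 0) (a : A) : D (a ^ n) = 0 := by
  rw [Derivation.leibniz_pow, ← Nat.cast_smul_eq_nsmul R, hn, zero_smul]

variable {R A : Type*} [CommRing R] [CommRing A] [Algebra R A]

theorem derivation_lie_smul_smul (D E : Derivation R A A) (a b : A) :
    ⁅a • D, b • E⁆ = (a * b) • ⁅D, E⁆ + (a * D b) • E - (b * E a) • D := by
  ext f
  simp only [Derivation.commutator_apply, Derivation.add_apply, Derivation.sub_apply,
    Derivation.smul_apply, Derivation.leibniz, smul_eq_mul]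
  ring

theorem derivation_apply_comm_of_lie_eq_zero {D E : Derivation R A A} (h : ⁅D, E⁆ = 0) (f : A) :
    D (E f) = E (D f) := by
  rw [← sub_eq_zero, ← Derivation.commutator_apply, h, Derivation.zero_apply]

end Derivation

section PDerivSemiring

variable {σ R : Type*} [CommSemiring R]

theorem pderiv_X_add_one_of_ne {i j : σ} (h : j ≠ i) :
    pderiv i (X j + 1 : MvPolynomial σ R) = 0 := by
  rw [map_add, pderiv_X_of_ne h, pderiv_one, add_zero]

theorem pderiv_X_pow_mul_X_add_one_of_ne {n : ℕ} (hn : (n : R) = 0) {i j : σ} (h : j ≠ i) :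
    pderiv i (X i ^ n * (X j + 1) : MvPolynomial σ R) = 0 := by
  rw [pderiv_mul, derivation_pow_eq_zero_of_natCast_eq_zero _ hn, pderiv_X_add_one_of_ne h,
    zero_mul, mul_zero, add_zero]

end PDerivSemiring

section PDeriv

variable {σ R : Type*} [CommRing R]

theorem lie_pderiv_pderiv (i j : σ) : ⁅pderiv (R := R) i, pderiv (R := R) j⁆ = 0 := by
  have pderiv_pderiv_X (l m k : σ) : pderiv l (pderiv m (X k : MvPolynomial σ R)) = 0 := by
    obtain rfl | hk := eq_or_ne k m
    · rw [pderiv_X_self, pderiv_one]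
    · rw [pderiv_X_of_ne hk, map_zero]
  refine derivation_ext fun k => ?_
  rw [Derivation.commutator_apply, pderiv_pderiv_X, pderiv_pderiv_X, sub_zero,
    Derivation.zero_apply]

theorem lie_smul_pderiv_eq_zero {i j : σ} {a b : MvPolynomial σ R}
    (ha : pderiv j a = 0) (hb : pderiv i b = 0) :
    ⁅a • pderiv (R := R) i, b • pderiv (R := R) j⁆ = 0 := by
  rw [derivation_lie_smul_smul, lie_pderiv_pderiv, ha, hb]
  simp only [mul_zero, zero_smul, smul_zero, add_zero, sub_zero]

end PDeriv

section ThetaOperators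

variable {S : Type*} [CommRing S]

/-- `Θ₃` as a derivation of `S[T, T₁₁, T₁₂, T₂₂]`, with `q` in place of the prime `p`. -/
noncomputable def theta3Derivation (S : Type*) [CommRing S] (q : ℕ) :
    Derivation S (MvPolynomial (Fin 4) S) (MvPolynomial (Fin 4) S) :=
  (X 0 ^ (2 * q) * (X 1 + 1) : MvPolynomial (Fin 4) S) • pderiv 1 -
    (X 0 ^ q * (X 2 + 1) : MvPolynomial (Fin 4) S) • pderiv 2 +
    (X 3 + 1 : MvPolynomial (Fin 4) S) • pderiv 3

/-- The derivation `(T - T^q)·∂/∂T`, that is, `θ₄⁽⁰⁾` with `q` in place of the prime `p`. -/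
noncomputable def theta4Derivation (S : Type*) [CommRing S] (q : ℕ) :
    Derivation S (MvPolynomial (Fin 4) S) (MvPolynomial (Fin 4) S) :=
  (X 0 - X 0 ^ q : MvPolynomial (Fin 4) S) • pderiv 0

theorem Theta3_eq_theta3Derivation (q : ℕ) (f : MvPolynomial (Fin 4) S) :
    Theta3 q f = theta3Derivation S q f := by
  simp only [Theta3, Dij, theta3Derivation, Derivation.add_apply, Derivation.sub_apply,
    Derivation.smul_apply, smul_eq_mul, mul_assoc]

theorem theta4_eq_theta4Derivation_add_zsmul (q : ℕ) (N : ℤ) (f : MvPolynomial (Fin 4) S) :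
    theta4 q N f = theta4Derivation S q f + N • f := by
  simp only [theta4, theta4Derivation, Derivation.smul_apply, smul_eq_mul, zsmul_eq_mul]

theorem lie_smul_pderiv_theta4Derivation (q : ℕ) {i : Fin 4} (hi : i ≠ 0)
    {a : MvPolynomial (Fin 4) S} (ha : pderiv 0 a = 0) :
    ⁅a • pderiv (R := S) i, theta4Derivation S q⁆ = 0 := by
  refine lie_smul_pderiv_eq_zero ha ?_
  rw [map_sub, pderiv_pow, pderiv_X_of_ne hi.symm, mul_zero, sub_zero]

theorem lie_theta3Derivation_theta4Derivation {q : ℕ} (hq : (q : S) = 0) :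
    ⁅theta3Derivation S q, theta4Derivation S q⁆ = 0 := by
  have h2q : ((2 * q : ℕ) : S) = 0 := by rw [Nat.cast_mul, hq, mul_zero]
  rw [theta3Derivation, LieRing.add_lie,
    sub_lie (M := Derivation S (MvPolynomial (Fin 4) S) (MvPolynomial (Fin 4) S)),
    lie_smul_pderiv_theta4Derivation q (by decide)
      (pderiv_X_pow_mul_X_add_one_of_ne h2q (by decide)),
    lie_smul_pderiv_theta4Derivation q (by decide)
      (pderiv_X_pow_mul_X_add_one_of_ne hq (by decide)),
    lie_smul_pderiv_theta4Derivation q (by decide) (pderiv_X_add_one_of_ne (by decide)),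
    sub_zero, add_zero]

theorem theta4_sub_two_mul {q : ℕ} (hq : (q : S) = 0) (N : ℤ) (f : MvPolynomial (Fin 4) S) :
    theta4 q (N - 2 * (q : ℤ)) f = theta4 q N f := by
  have hN : ((N - 2 * (q : ℤ) : ℤ) : S) = N := by
    rw [Int.cast_sub, Int.cast_mul, Int.cast_natCast, hq, mul_zero, sub_zero]
  rw [theta4_eq_theta4Derivation_add_zsmul, theta4_eq_theta4Derivation_add_zsmul,
    ← Int.cast_smul_eq_zsmul S, hN, Int.cast_smul_eq_zsmul]

theorem stmt_13_general {q : ℕ} (hq : (q : S) = 0) (N : ℤ) (f : MvPolynomial (Fin 4) S) :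
    Theta3 q (theta4 q N f) = theta4 q (N - 2 * (q : ℤ)) (Theta3 q f) := by
  rw [theta4_sub_two_mul hq]
  simp only [Theta3_eq_theta3Derivation, theta4_eq_theta4Derivation_add_zsmul]
  rw [map_add, map_zsmul,
    derivation_apply_comm_of_lie_eq_zero (lie_theta3Derivation_theta4Derivation hq)]

end ThetaOperators

/-- Let `p` be a prime and `S` a commutative ring of characteristic `p`.  Then for every
`N : ℤ`, `Θ₃ ∘ θ₄⁽ᴺ⁾ = θ₄⁽ᴺ⁻²ᵖ⁾ ∘ Θ₃` on `S[T, T₁₁, T₁₂, T₂₂]`. -/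
theorem stmt_13 (p : ℕ) (hp : p.Prime) (S : Type*) [CommRing S] [CharP S p]
    (N : ℤ) (f : MvPolynomial (Fin 4) S) :
    Theta3 p (theta4 p N f) = theta4 p (N - 2 * (p : ℤ)) (Theta3 p f) :=
  stmt_13_general (CharP.cast_eq_zero S p) N f
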